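/- For every integer N ≥ 2 there exists a constant C = C(N) with the following property. Let t₀ < T be reals, let u : ℝ² × [t₀,T] → ℝ² be a smooth vector field, 2π-periodic in each space variable, and let f : ℝ² × [t₀,T] → ℝ be a smooth, 2π-periodic-in-space solution of the transport equation ∂_t f + u·∇f = g with f(·,t₀) = f₀, where g is smooth and 2π-periodic in space. Then for every t ∈ [t₀,T]: ‖D^N f(·,t)‖_{C⁰} ≤ ( ‖D^N f₀‖_{C⁰} + C (t−t₀) ‖D^N u‖_{C⁰} ‖Df₀‖_{C⁰} ) e^{C (t−t₀) ‖Du‖_{C⁰}} + ∫_{t₀}^{t} e^{C (t−τ) ‖Du‖_{C⁰}} ( ‖D^N g(·,τ)‖_{C⁰} + C (t−τ) ‖D^N u‖_{C⁰} ‖Dg(·,τ)‖_{C⁰} ) dτ, where ‖D^j u‖_{C⁰} denotes the supremum over ℝ² × [t₀,T] of the norm of the j-th spatial derivative of u. -/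

import Mathlib

noncomputable section

open Real MeasureTheory
open scoped BigOperators

abbrev E2 : Type := EuclideanSpace ℝ (Fin 2)

/-- `‖Du‖_{C⁰}`: supremum over `x ∈ ℝ²`, `t ∈ [t₀,T]` of the norm of the spatial
derivative of `u`. -/
def supDu (u : E2 × ℝ → E2) (t₀ T : ℝ) : ℝ :=
  ⨆ (x : E2) (s : Set.Icc t₀ T), ‖fderiv ℝ (fun y => u (y, (s : ℝ))) x‖

/-- `‖D^N u‖_{C⁰}`: supremum over `x ∈ ℝ²`, `t ∈ [t₀,T]` of the norm of the `N`-th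
spatial derivative of `u`. -/
def supDNu (N : ℕ) (u : E2 × ℝ → E2) (t₀ T : ℝ) : ℝ :=
  ⨆ (x : E2) (s : Set.Icc t₀ T), ‖iteratedFDeriv ℝ N (fun y => u (y, (s : ℝ))) x‖

/-!
Follow a characteristic `X` ending at `(x, t)`. At time `s`, write `u = u (X s, s) + w`, where the
frozen velocity is constant in space and `w` vanishes at `X s`. The frozen part turns
`∂ₜ + u · ∇` into `d/ds` along `X`, and since `w (X s) = 0` the derivative of order `N + 1` of `f`
drops out of `D^N (w · ∇f)`. The Leibniz terms that remain are `‖D^i f‖ ‖D^j u‖` with `i, j ≥ 1`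
and `i + j = N + 1`; Landau's inequality makes the sequences `‖D^i f‖` and `‖D^j u‖` log-convex up
to a constant, hence bounds these terms by `‖Df‖ ‖D^N u‖ + ‖D^N f‖ ‖Du‖`. The case `N = 1` bounds
`‖Df‖` on its own, and Grönwall's inequality for `‖D^N f‖` with this bound inserted is the estimate.
-/

section RealSequences

open Finset

lemma le_max_endpoints_of_sq_le_mul {c : ℕ → ℝ} (hc : ∀ j, 0 ≤ c j) {n : ℕ}
    (hlog : ∀ j, j + 2 ≤ n → c (j + 1) ^ 2 ≤ c j * c (j + 2)) {j : ℕ} (hj : j ≤ n) :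
    c j ≤ max (c 0) (c n) := by
  induction n generalizing j with
  | zero => simp [Nat.le_zero.1 hj]
  | succ n ih =>
    have ih' : ∀ {j}, j ≤ n → c j ≤ max (c 0) (c n) := ih fun j hj => hlog j (by lia)
    have hlast : c n ≤ max (c 0) (c (n + 1)) := by
      cases n with
      | zero => exact le_max_left _ _
      | succ m =>
        by_contra! hlt
        obtain ⟨h0, h2⟩ := max_lt_iff.1 hlt
        have hm : c m ≤ c (m + 1) := (ih' m.le_succ).trans_eq (max_eq_right h0.le)
        nlinarith [hlog m le_rfl, hc 0, hc (m + 2)]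
    obtain hj | rfl := hj.lt_or_eq
    · exact (ih' (Nat.lt_succ_iff.1 hj)).trans (max_le (le_max_left _ _) hlast)
    · exact le_max_right _ _

lemma le_pow_mul_max_endpoints_of_sq_le_mul {c : ℕ → ℝ} (hc : ∀ j, 0 ≤ c j) {K : ℝ}
    (hK : 1 ≤ K) {n : ℕ}
    (hlog : ∀ j, j + 2 ≤ n → c (j + 1) ^ 2 ≤ K ^ 2 * (c j * c (j + 2))) {j : ℕ} (hj : j ≤ n) :
    c j ≤ K ^ n ^ 2 * max (c 0) (c n) := by
  have : 0 ≤ K := zero_le_one.trans hK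
  -- The weights `K ^ j ^ 2` absorb `K ^ 2`, because `2 * (j + 1) ^ 2 + 2 = j ^ 2 + (j + 2) ^ 2`.
  have hweighted := le_max_endpoints_of_sq_le_mul (c := fun j => K ^ j ^ 2 * c j)
    (fun j => mul_nonneg (by positivity) (hc j)) (n := n) (fun j hj => ?_) hj
  · calc c j ≤ K ^ j ^ 2 * c j := le_mul_of_one_le_left (hc j) (one_le_pow₀ hK)
      _ ≤ max (K ^ 0 ^ 2 * c 0) (K ^ n ^ 2 * c n) := hweighted
      _ ≤ max (K ^ n ^ 2 * c 0) (K ^ n ^ 2 * c n) := by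
        have := hc 0
        gcongr
        exact n.zero_le
      _ = K ^ n ^ 2 * max (c 0) (c n) := (mul_max_of_nonneg _ _ (by positivity)).symm
  · calc (K ^ (j + 1) ^ 2 * c (j + 1)) ^ 2 = (K ^ (j + 1) ^ 2) ^ 2 * c (j + 1) ^ 2 := by ring
      _ ≤ (K ^ (j + 1) ^ 2) ^ 2 * (K ^ 2 * (c j * c (j + 2))) := by gcongr; exact hlog j hj
      _ = K ^ j ^ 2 * c j * (K ^ (j + 2) ^ 2 * c (j + 2)) := by ring

lemma mul_le_pow_mul_add_of_sq_le_mul {A B : ℕ → ℝ} (hA : ∀ j, 0 ≤ A j) (hB : ∀ j, 0 ≤ B j)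
    {K : ℝ} (hK : 1 ≤ K) {n : ℕ} (hlogA : ∀ j, j + 2 ≤ n → A (j + 1) ^ 2 ≤ K * (A j * A (j + 2)))
    (hlogB : ∀ j, j + 2 ≤ n → B (j + 1) ^ 2 ≤ K * (B j * B (j + 2))) {i j : ℕ} (hij : i + j = n) :
    A i * B j ≤ K ^ n ^ 2 * (A 0 * B n + A n * B 0) := by
  have hAB : ∀ i j, 0 ≤ A i * B j := fun i j => mul_nonneg (hA i) (hB j)
  have hmax := le_pow_mul_max_endpoints_of_sq_le_mul (c := fun i => A i * B (n - i))
    (fun i => hAB _ _) hK (fun i hi => ?_) (j := i) (n := n) (by lia)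
  · obtain rfl : j = n - i := by lia
    refine hmax.trans (mul_le_mul_of_nonneg_left ?_ (by positivity))
    simpa using ⟨hAB n 0, hAB 0 n⟩
  · obtain ⟨k, rfl⟩ := Nat.exists_eq_add_of_le hi
    have hsub : i + 2 + k - i = k + 2 ∧ i + 2 + k - (i + 1) = k + 1 ∧ i + 2 + k - (i + 2) = k := by
      lia
    simp only [hsub]
    calc (A (i + 1) * B (k + 1)) ^ 2 = A (i + 1) ^ 2 * B (k + 1) ^ 2 := by ring
      _ ≤ K * (A i * A (i + 2)) * (K * (B k * B (k + 2))) :=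
        mul_le_mul (hlogA i hi) (hlogB k (by lia)) (sq_nonneg _)
          ((sq_nonneg _).trans (hlogA i hi))
      _ = K ^ 2 * (A i * B (k + 2) * (A (i + 2) * B k)) := by ring

/-- The Leibniz sum for the `(n + 1)`-st derivative of a product whose second factor vanishes at
the point of differentiation: `A i` stands for the `i`-th derivative of the first factor and `B j`
for the `(j + 1)`-st derivative of the second one. -/
def leibnizSum (n : ℕ) (A B : ℕ → ℝ) : ℝ :=
  ∑ p ∈ antidiagonal n, (n + 1).choose p.1 * (A p.1 * B p.2)

lemma leibnizSum_zero (A B : ℕ → ℝ) : leibnizSum 0 A B = A 0 * B 0 := by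
  simp [leibnizSum]

lemma leibnizSum_mono {n : ℕ} {A A' B B' : ℕ → ℝ} (hA : ∀ i ≤ n, A i ≤ A' i)
    (hB : ∀ j ≤ n, B j ≤ B' j) (hA' : ∀ i, 0 ≤ A' i) (hB0 : ∀ j, 0 ≤ B j) :
    leibnizSum n A B ≤ leibnizSum n A' B' := by
  refine sum_le_sum fun p hp => mul_le_mul_of_nonneg_left ?_ (Nat.cast_nonneg _)
  exact mul_le_mul (hA _ (HasAntidiagonal.antidiagonal.fst_le hp))
    (hB _ (HasAntidiagonal.antidiagonal.snd_le hp)) (hB0 _) (hA' _)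

lemma sum_antidiagonal_choose_succ_fst_le (n : ℕ) :
    ∑ p ∈ antidiagonal n, ((n + 1).choose p.1 : ℝ) ≤ 2 ^ (n + 1) := by
  rw [Finset.Nat.sum_antidiagonal_eq_sum_range_succ_mk]
  have hsum := Nat.sum_range_choose (n + 1)
  rw [sum_range_succ] at hsum
  exact_mod_cast Nat.le.intro hsum

lemma leibnizSum_le_of_sq_le_mul {A B : ℕ → ℝ} (hA : ∀ j, 0 ≤ A j) (hB : ∀ j, 0 ≤ B j)
    {K : ℝ} (hK : 1 ≤ K) {n : ℕ} (hlogA : ∀ j, j + 2 ≤ n → A (j + 1) ^ 2 ≤ K * (A j * A (j + 2)))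
    (hlogB : ∀ j, j + 2 ≤ n → B (j + 1) ^ 2 ≤ K * (B j * B (j + 2))) :
    leibnizSum n A B ≤ 2 ^ (n + 1) * K ^ n ^ 2 * (A 0 * B n + A n * B 0) := by
  have hends : 0 ≤ A 0 * B n + A n * B 0 :=
    add_nonneg (mul_nonneg (hA 0) (hB n)) (mul_nonneg (hA n) (hB 0))
  calc leibnizSum n A B
      ≤ ∑ p ∈ antidiagonal n, (n + 1).choose p.1 * (K ^ n ^ 2 * (A 0 * B n + A n * B 0)) := by
        refine sum_le_sum fun p hp => mul_le_mul_of_nonneg_left ?_ (Nat.cast_nonneg _)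
        exact mul_le_pow_mul_add_of_sq_le_mul hA hB hK hlogA hlogB (mem_antidiagonal.1 hp)
    _ = (∑ p ∈ antidiagonal n, ((n + 1).choose p.1 : ℝ)) *
          (K ^ n ^ 2 * (A 0 * B n + A n * B 0)) := (sum_mul ..).symm
    _ ≤ 2 ^ (n + 1) * (K ^ n ^ 2 * (A 0 * B n + A n * B 0)) := by
        gcongr
        exact sum_antidiagonal_choose_succ_fst_le n
    _ = _ := (mul_assoc ..).symm

end RealSequences

section Gronwall

open Set intervalIntegral

lemma continuous_integral_right {γ : ℝ → ℝ} (hγ : Continuous γ) (a : ℝ) :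
    Continuous fun t => ∫ s in a..t, γ s :=
  continuous_primitive (fun _ _ => hγ.intervalIntegrable _ _) a

lemma integral_integral_eq_integral_sub_mul {γ : ℝ → ℝ} (hγ : Continuous γ) (a b : ℝ) :
    ∫ t in a..b, ∫ s in a..t, γ s = ∫ s in a..b, (b - s) * γ s := by
  have hderiv : ∀ t, HasDerivAt (fun t => t * (∫ s in a..t, γ s) - ∫ s in a..t, s * γ s)
      (∫ s in a..t, γ s) t := fun t => by
    have h := ((hasDerivAt_id t).mul (hγ.integral_hasStrictDerivAt a t).hasDerivAt).sub
      ((continuous_id.mul hγ).integral_hasStrictDerivAt a t).hasDerivAt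
    convert! h using 1
    simp
  rw [integral_eq_sub_of_hasDerivAt (fun t _ => hderiv t)
    ((continuous_integral_right hγ a).intervalIntegrable _ _)]
  simp only [integral_same, mul_zero, sub_zero, sub_mul]
  rw [intervalIntegral.integral_sub ((by fun_prop : Continuous _).intervalIntegrable _ _)
    ((by fun_prop : Continuous _).intervalIntegrable _ _), intervalIntegral.integral_const_mul]

variable {t₀ T t l : ℝ}

lemma le_exp_mul_add_integral_of_le_add_integral {φ G : ℝ → ℝ} (hφ : Continuous φ)
    (hG : Continuous G) {φ₀ : ℝ} (hl : 0 ≤ l)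
    (h : ∀ t ∈ Icc t₀ T, φ t ≤ φ₀ + ∫ s in t₀..t, (G s + l * φ s)) (ht : t ∈ Icc t₀ T) :
    φ t ≤ exp (l * (t - t₀)) * φ₀ + ∫ s in t₀..t, exp (l * (t - s)) * G s := by
  let Ψ : ℝ → ℝ := fun t => φ₀ + ∫ s in t₀..t, (G s + l * φ s)
  let Q : ℝ → ℝ := fun t => exp (-l * t) * Ψ t - ∫ s in t₀..t, exp (-l * s) * G s
  have hQ : ∀ t, HasDerivAt Q (exp (-l * t) * (l * (φ t - Ψ t))) t := fun t => by
    have hΨ : HasDerivAt Ψ (G t + l * φ t) t :=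
      (Continuous.integral_hasStrictDerivAt (by fun_prop) t₀ t).hasDerivAt.const_add φ₀
    have hexp : HasDerivAt (fun t => exp (-l * t)) (exp (-l * t) * (-l * 1)) t :=
      ((hasDerivAt_id t).const_mul (-l)).exp
    have hG' : Continuous fun s => exp (-l * s) * G s := by fun_prop
    convert! (hexp.mul hΨ).sub (hG'.integral_hasStrictDerivAt t₀ t).hasDerivAt using 1
    ring
  have hanti : AntitoneOn Q (Icc t₀ T) := by
    refine antitoneOn_of_deriv_nonpos (convex_Icc _ _)
      (fun t _ => (hQ t).continuousAt.continuousWithinAt)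
      (fun t _ => (hQ t).differentiableAt.differentiableWithinAt) fun t ht => ?_
    rw [(hQ t).deriv]
    have hle : φ t - Ψ t ≤ 0 := sub_nonpos.2 (h t (interior_subset ht))
    exact mul_nonpos_of_nonneg_of_nonpos (exp_pos _).le (mul_nonpos_of_nonneg_of_nonpos hl hle)
  have hQt : Q t ≤ exp (-l * t₀) * φ₀ := by
    simpa [Q, Ψ] using hanti (left_mem_Icc.2 (ht.1.trans ht.2)) ht ht.1
  have hfactor : ∀ s, exp (l * (t - s)) = exp (l * t) * exp (-l * s) := fun s => by
    rw [← exp_add]; ring_nf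
  calc φ t ≤ Ψ t := h t ht
    _ = exp (l * t) * (exp (-l * t) * Ψ t) := by rw [← mul_assoc, ← hfactor]; simp
    _ ≤ exp (l * t) * (exp (-l * t₀) * φ₀ + ∫ s in t₀..t, exp (-l * s) * G s) := by
      gcongr
      exact sub_le_iff_le_add.1 hQt
    _ = _ := by
      simp only [hfactor, mul_add, mul_assoc, intervalIntegral.integral_const_mul]

lemma le_of_le_add_integral_of_le_add_integral {a m G₁ G₂ : ℝ → ℝ} (ha : Continuous a)
    (hm : Continuous m) (hG₁ : Continuous G₁) (hG₂ : Continuous G₂) {a₀ m₀ k : ℝ} (hl : 0 ≤ l)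
    (hk : 0 ≤ k) (hale : ∀ t ∈ Icc t₀ T, a t ≤ a₀ + ∫ s in t₀..t, (G₁ s + l * a s))
    (hmle : ∀ t ∈ Icc t₀ T, m t ≤ m₀ + ∫ s in t₀..t, (G₂ s + k * a s + l * m s))
    (ht : t ∈ Icc t₀ T) :
    m t ≤ (m₀ + k * (t - t₀) * a₀) * exp (l * (t - t₀)) +
      ∫ s in t₀..t, exp (l * (t - s)) * (G₂ s + k * (t - s) * G₁ s) := by
  let γ : ℝ → ℝ := fun τ => exp (l * (t - τ)) * G₁ τ
  have hγ : Continuous γ := by fun_prop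
  have := continuous_integral_right hγ t₀
  have ha_le : ∀ s ∈ Icc t₀ t,
      exp (l * (t - s)) * a s ≤ exp (l * (t - t₀)) * a₀ + ∫ τ in t₀..s, γ τ := fun s hs => by
    have hexp : ∀ τ, exp (l * (t - s)) * exp (l * (s - τ)) = exp (l * (t - τ)) := fun τ => by
      rw [← exp_add]; ring_nf
    have hgronwall :=
      le_exp_mul_add_integral_of_le_add_integral ha hG₁ hl hale ⟨hs.1, hs.2.trans ht.2⟩
    refine (mul_le_mul_of_nonneg_left hgronwall (exp_pos _).le).trans_eq ?_
    simp only [mul_add, ← intervalIntegral.integral_const_mul, ← mul_assoc, hexp, γ]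
  calc m t ≤ exp (l * (t - t₀)) * m₀ + ∫ s in t₀..t, exp (l * (t - s)) * (G₂ s + k * a s) :=
        le_exp_mul_add_integral_of_le_add_integral hm (by fun_prop) hl hmle ht
    _ ≤ exp (l * (t - t₀)) * m₀ + ∫ s in t₀..t, (exp (l * (t - s)) * G₂ s +
          k * (exp (l * (t - t₀)) * a₀ + ∫ τ in t₀..s, γ τ)) := by
        refine add_le_add_right (integral_mono_on ht.1
          (Continuous.intervalIntegrable (by fun_prop) _ _)
          (Continuous.intervalIntegrable (by fun_prop) _ _) fun s hs => ?_) _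
        linarith [mul_le_mul_of_nonneg_left (ha_le s hs) hk]
    _ = (m₀ + k * (t - t₀) * a₀) * exp (l * (t - t₀)) +
          ((∫ s in t₀..t, exp (l * (t - s)) * G₂ s) + k * ∫ s in t₀..t, (t - s) * γ s) := by
        rw [integral_add (Continuous.intervalIntegrable (by fun_prop) _ _)
          (Continuous.intervalIntegrable (by fun_prop) _ _), intervalIntegral.integral_const_mul,
          integral_add (Continuous.intervalIntegrable (by fun_prop) _ _)
          (Continuous.intervalIntegrable (by fun_prop) _ _), intervalIntegral.integral_const,
          integral_integral_eq_integral_sub_mul hγ, smul_eq_mul]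
        ring
    _ = _ := by
        rw [← intervalIntegral.integral_const_mul, ← integral_add
          (Continuous.intervalIntegrable (by fun_prop) _ _)
          (Continuous.intervalIntegrable (by fun_prop) _ _)]
        congr 1
        exact integral_congr fun s _ => by simp only [γ]; ring

end Gronwall

section Landau

open Set Metric
open scoped NNReal

variable {E F : Type*} [NormedAddCommGroup E] [NormedSpace ℝ E] [NormedAddCommGroup F]
  [NormedSpace ℝ F] {h : E → F} {A : ℝ} {B : ℝ≥0}

lemma mul_norm_fderiv_le_of_lipschitzWith_fderiv (hd : Differentiable ℝ h) (hA : ∀ x, ‖h x‖ ≤ A)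
    (hB : LipschitzWith B (fderiv ℝ h)) (x : E) {r : ℝ} (hr : 0 < r) :
    r * ‖fderiv ℝ h x‖ ≤ 2 * A + B * r ^ 2 := by
  have hA0 : 0 ≤ A := (norm_nonneg _).trans (hA x)
  rw [mul_comm, ← le_div_iff₀ hr]
  refine ContinuousLinearMap.opNorm_le_of_unit_norm (by positivity) fun v hv => ?_
  have hrv : ‖r • v‖ = r := by rw [norm_smul, hv, mul_one, Real.norm_of_nonneg hr.le]
  have htaylor : ‖h (x + r • v) - h x - fderiv ℝ h x (r • v)‖ ≤ B * r * r := by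
    have hball := (convex_closedBall x r).norm_image_sub_le_of_norm_fderiv_le' (𝕜 := ℝ)
      (φ := fderiv ℝ h x) (C := B * r) (fun y _ => hd y) (fun y hy => ?_)
      (mem_closedBall_self hr.le) (y := x + r • v) (by simp [hrv])
    · simpa [hrv] using hball
    · rw [← dist_eq_norm]
      exact (hB.dist_le_mul y x).trans (by gcongr; exact hy)
  rw [le_div_iff₀ hr]
  calc ‖fderiv ℝ h x v‖ * r = ‖fderiv ℝ h x (r • v)‖ := by
        rw [map_smul, norm_smul, Real.norm_of_nonneg hr.le, mul_comm]
    _ = ‖h (x + r • v) - h x - (h (x + r • v) - h x - fderiv ℝ h x (r • v))‖ := by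
        rw [sub_sub_cancel]
    _ ≤ ‖h (x + r • v)‖ + ‖h x‖ + B * r * r :=
        (norm_sub_le _ _).trans (add_le_add (norm_sub_le _ _) htaylor)
    _ ≤ 2 * A + B * r ^ 2 := by linarith [hA (x + r • v), hA x]

lemma sq_norm_fderiv_le_of_lipschitzWith_fderiv (hd : Differentiable ℝ h) (hA : ∀ x, ‖h x‖ ≤ A)
    (hB : LipschitzWith B (fderiv ℝ h)) (x : E) : ‖fderiv ℝ h x‖ ^ 2 ≤ 8 * (A * B) := by
  have hA0 : 0 ≤ A := (norm_nonneg _).trans (hA x)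
  have hquad : ∀ r : ℝ, 0 ≤ B * (r * r) + -‖fderiv ℝ h x‖ * r + 2 * A := fun r => by
    rcases le_or_gt r 0 with hr | hr
    · have := mul_nonneg (norm_nonneg (fderiv ℝ h x)) (neg_nonneg.2 hr)
      have := mul_nonneg B.coe_nonneg (mul_self_nonneg r)
      linarith
    · linarith [mul_norm_fderiv_le_of_lipschitzWith_fderiv hd hA hB x hr]
  have hdiscrim := discrim_le_zero hquad
  rw [discrim] at hdiscrim
  linarith

lemma sq_norm_iteratedFDeriv_succ_le {k : ℕ} (hh : ContDiff ℝ (k + 2 : ℕ) h)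
    (hA : ∀ x, ‖iteratedFDeriv ℝ k h x‖ ≤ A) (hB : ∀ x, ‖iteratedFDeriv ℝ (k + 2) h x‖ ≤ B)
    (x : E) : ‖iteratedFDeriv ℝ (k + 1) h x‖ ^ 2 ≤ 8 * (A * B) := by
  have hdiff : ∀ n < k + 2, Differentiable ℝ (iteratedFDeriv ℝ n h) := fun n hn =>
    hh.differentiable_iteratedFDeriv (mod_cast hn)
  rw [← norm_fderiv_iteratedFDeriv]
  refine sq_norm_fderiv_le_of_lipschitzWith_fderiv (hdiff k (by lia)) hA ?_ x
  rw [fderiv_iteratedFDeriv]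
  have hlip : LipschitzWith B (iteratedFDeriv ℝ (k + 1) h) :=
    lipschitzWith_of_nnnorm_fderiv_le (𝕜 := ℝ) (hdiff (k + 1) (by lia)) fun y => by
      rw [← NNReal.coe_le_coe, coe_nnnorm, norm_fderiv_iteratedFDeriv]
      exact hB y
  simpa only [one_mul] using (LinearIsometryEquiv.lipschitz _).comp hlip

end Landau

section DirectionalDerivative

variable {E F : Type*} [NormedAddCommGroup E] [NormedSpace ℝ E] [NormedAddCommGroup F]
  [NormedSpace ℝ F] {f : E → F}

lemma fderiv_fderiv_apply (hf : ContDiff ℝ 2 f) (w x : E) :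
    fderiv ℝ (fun y => fderiv ℝ f y w) x = fderiv ℝ (fderiv ℝ f) x w := by
  have hd : Differentiable ℝ (fderiv ℝ f) :=
    (hf.fderiv_right (m := 1) le_rfl).differentiable one_ne_zero
  have hsymm : IsSymmSndFDerivAt ℝ f x := hf.contDiffAt.isSymmSndFDerivAt (by simp)
  ext v
  rw [fderiv_clm_apply (hd x) (differentiableAt_const w)]
  simp [hsymm v w]

lemma iteratedFDeriv_fderiv_apply {n : ℕ} (hf : ContDiff ℝ (n + 1 : ℕ) f) (w : E) :
    iteratedFDeriv ℝ n (fun y => fderiv ℝ f y w) =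
      fun x => fderiv ℝ (iteratedFDeriv ℝ n f) x w := by
  induction n with
  | zero =>
    ext x m
    simp [iteratedFDeriv_zero_eq_comp, LinearIsometryEquiv.comp_fderiv]
  | succ n ih =>
    have h2 : ContDiff ℝ 2 (iteratedFDeriv ℝ n f) :=
      hf.iteratedFDeriv_right (by norm_cast; lia)
    funext x
    rw [iteratedFDeriv_succ_eq_comp_left, iteratedFDeriv_succ_eq_comp_left,
      ih (hf.of_le (by norm_cast; lia)), Function.comp_apply, fderiv_fderiv_apply h2]
    let curry : (E →L[ℝ] E [×n]→L[ℝ] F) ≃ₗᵢ[ℝ] (E [×n + 1]→L[ℝ] F) :=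
      (continuousMultilinearCurryLeftEquiv ℝ (fun _ : Fin (n + 1) => E) F).symm
    have hcurry :=
      curry.comp_fderiv (𝕜 := ℝ) (G := E) (f := fderiv ℝ (iteratedFDeriv ℝ n f)) (x := x)
    exact (DFunLike.congr_fun hcurry w).symm

end DirectionalDerivative

section Periodicity

open Set Function Module

variable {E V ι : Type*} [NormedAddCommGroup E] [NormedSpace ℝ E]

lemma periodic_of_mem_span {α G : Type*} [AddCommGroup G] {s : Set G} {h : G → α}
    (hs : ∀ c ∈ s, Periodic h c) {c : G} (hc : c ∈ Submodule.span ℤ s) : Periodic h c := by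
  induction hc using Submodule.span_induction with
  | mem c hc => exact hs c hc
  | zero => exact fun x => by rw [add_zero]
  | add c d _ _ hc hd => exact hc.add_period hd
  | smul n c _ hc => exact hc.zsmul n

lemma image_closure_fundamentalDomain_eq_range [Finite ι] (b : Basis ι ℝ E) {α : Type*}
    {h : E → α} (hh : ∀ i, Periodic h (b i)) :
    h '' closure (ZSpan.fundamentalDomain b) = range h := by
  cases nonempty_fintype ι
  refine (image_subset_range _ _).antisymm ?_
  rintro _ ⟨x, rfl⟩
  refine ⟨ZSpan.fract b x, subset_closure (ZSpan.fract_mem_fundamentalDomain b x), ?_⟩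
  rw [ZSpan.fract_apply]
  exact (periodic_of_mem_span (forall_mem_range.2 hh) (ZSpan.floor b x).2).sub_eq x

lemma isCompact_closure_fundamentalDomain [Finite ι] (b : Basis ι ℝ E) :
    IsCompact (closure (ZSpan.fundamentalDomain b)) := by
  have := Module.Finite.of_basis b
  have : ProperSpace E := FiniteDimensional.proper ℝ E
  exact (ZSpan.fundamentalDomain_isBounded b).isCompact_closure

lemma periodic_iteratedFDeriv [NormedAddCommGroup V] [NormedSpace ℝ V] {h : E → V} {c : E}
    (hh : Periodic h c) (k : ℕ) :
    Periodic (iteratedFDeriv ℝ k h) c := fun x => by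
  rw [← iteratedFDeriv_comp_add_right, funext hh]

end Periodicity

section Slices

open Set Function Module

variable {ι E V : Type*} [NormedAddCommGroup E] [NormedSpace ℝ E] [NormedAddCommGroup V]
  [NormedSpace ℝ V] {F : E × ℝ → V} {k : ℕ} {s : ℝ}

/-- Periodicity in space, at every time, with respect to the lattice spanned by the basis `b`. -/
def SpatiallyPeriodic (b : Basis ι ℝ E) (F : E × ℝ → V) : Prop :=
  ∀ s i, Periodic (fun x => F (x, s)) (b i)

/-- `‖D^k F(·, s)‖_{C⁰}`, with the junk value `0` when the derivative is unbounded. -/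
def spatialDerivSup (k : ℕ) (F : E × ℝ → V) (s : ℝ) : ℝ :=
  ⨆ x : E, ‖iteratedFDeriv ℝ k (fun y => F (y, s)) x‖

/-- `‖D^k F‖_{C⁰}` over the times in `S`, with the junk value `0` when the derivative is
unbounded. -/
def spacetimeDerivSup (k : ℕ) (F : E × ℝ → V) (S : Set ℝ) : ℝ :=
  ⨆ (x : E) (s : S), ‖iteratedFDeriv ℝ k (fun y => F (y, (s : ℝ))) x‖

lemma spatialDerivSup_nonneg (k : ℕ) (F : E × ℝ → V) (s : ℝ) : 0 ≤ spatialDerivSup k F s :=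
  Real.iSup_nonneg fun _ => norm_nonneg _

lemma spacetimeDerivSup_nonneg (k : ℕ) (F : E × ℝ → V) (S : Set ℝ) :
    0 ≤ spacetimeDerivSup k F S :=
  Real.iSup_nonneg fun _ => Real.iSup_nonneg fun _ => norm_nonneg _

lemma contDiff_slice {n : WithTop ℕ∞} (hF : ContDiff ℝ n F) (s : ℝ) :
    ContDiff ℝ n fun y => F (y, s) :=
  hF.comp (contDiff_prodMk_left s)

lemma iteratedFDeriv_slice (hF : ContDiff ℝ k F) (x : E) (s : ℝ) :
    iteratedFDeriv ℝ k (fun y => F (y, s)) x =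
      (iteratedFDeriv ℝ k F (x, s)).compContinuousLinearMap
        fun _ => ContinuousLinearMap.inl ℝ E ℝ := by
  have hslice : (fun y => F (y, s)) =
      (fun z => F (z + ((0 : E), s))) ∘ ContinuousLinearMap.inl ℝ E ℝ := by
    ext y; simp
  have hshift : ContDiff ℝ k fun z => F (z + ((0 : E), s)) := by fun_prop
  rw [hslice, ContinuousLinearMap.iteratedFDeriv_comp_right _ hshift x le_rfl,
    iteratedFDeriv_comp_add_right]
  simp

lemma continuous_iteratedFDeriv_slice (hF : ContDiff ℝ k F) :
    Continuous fun p : ℝ × E => iteratedFDeriv ℝ k (fun y => F (y, p.1)) p.2 := by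
  simp only [iteratedFDeriv_slice hF]
  exact (ContinuousMultilinearMap.compContinuousLinearMapL (𝕜 := ℝ) (F := V)
    fun _ : Fin k => ContinuousLinearMap.inl ℝ E ℝ).continuous.comp
      ((hF.continuous_iteratedFDeriv le_rfl).comp continuous_swap)

variable [Finite ι] {b : Basis ι ℝ E}

lemma image_norm_iteratedFDeriv_slice_eq_range (hper : SpatiallyPeriodic b F) (k : ℕ) (s : ℝ) :
    (fun x => ‖iteratedFDeriv ℝ k (fun y => F (y, s)) x‖) '' closure (ZSpan.fundamentalDomain b) =
      range fun x => ‖iteratedFDeriv ℝ k (fun y => F (y, s)) x‖ :=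
  image_closure_fundamentalDomain_eq_range b fun i =>
    (periodic_iteratedFDeriv (hper s i) k).comp norm

lemma exists_forall_norm_iteratedFDeriv_slice_le (hF : ContDiff ℝ k F)
    (hper : SpatiallyPeriodic b F) {S : Set ℝ} (hS : IsCompact S) :
    ∃ M, ∀ s ∈ S, ∀ x, ‖iteratedFDeriv ℝ k (fun y => F (y, s)) x‖ ≤ M := by
  obtain ⟨M, hM⟩ := (hS.prod (isCompact_closure_fundamentalDomain b)).exists_bound_of_continuousOn
    (continuous_iteratedFDeriv_slice hF).continuousOn
  refine ⟨M, fun s hs => (forall_mem_range (p := (· ≤ M))).1 ?_⟩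
  rw [← image_norm_iteratedFDeriv_slice_eq_range hper]
  exact forall_mem_image.2 fun x hx => hM (s, x) ⟨hs, hx⟩

lemma norm_iteratedFDeriv_slice_le_spatialDerivSup (hF : ContDiff ℝ k F)
    (hper : SpatiallyPeriodic b F) (s : ℝ) (x : E) :
    ‖iteratedFDeriv ℝ k (fun y => F (y, s)) x‖ ≤ spatialDerivSup k F s := by
  obtain ⟨M, hM⟩ :=
    exists_forall_norm_iteratedFDeriv_slice_le hF hper (isCompact_singleton (x := s))
  exact le_ciSup (f := fun x => ‖iteratedFDeriv ℝ k (fun y => F (y, s)) x‖)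
    ⟨M, forall_mem_range.2 (hM s rfl)⟩ x

lemma continuous_spatialDerivSup (hF : ContDiff ℝ k F) (hper : SpatiallyPeriodic b F) :
    Continuous (spatialDerivSup k F) := by
  have hsup : spatialDerivSup k F = fun s => sSup
      ((fun x => ‖iteratedFDeriv ℝ k (fun y => F (y, s)) x‖) ''
        closure (ZSpan.fundamentalDomain b)) := by
    funext s
    rw [image_norm_iteratedFDeriv_slice_eq_range hper, spatialDerivSup, iSup]
  rw [hsup]
  exact (isCompact_closure_fundamentalDomain b).continuous_sSup
    (continuous_iteratedFDeriv_slice hF).norm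

lemma spatialDerivSup_le_spacetimeDerivSup (hF : ContDiff ℝ k F) (hper : SpatiallyPeriodic b F)
    {S : Set ℝ} (hS : IsCompact S) (hs : s ∈ S) :
    spatialDerivSup k F s ≤ spacetimeDerivSup k F S := by
  obtain ⟨M, hM⟩ := exists_forall_norm_iteratedFDeriv_slice_le hF hper hS
  have : Nonempty S := ⟨s, hs⟩
  refine ciSup_mono ⟨M, forall_mem_range.2 fun x => ciSup_le fun s => hM s s.2 x⟩ fun x => ?_
  exact le_ciSup (f := fun s : S => ‖iteratedFDeriv ℝ k (fun y => F (y, (s : ℝ))) x‖)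
    ⟨M, forall_mem_range.2 fun s => hM s s.2 x⟩ ⟨s, hs⟩

lemma sq_spatialDerivSup_succ_le (hF : ContDiff ℝ (k + 2 : ℕ) F) (hper : SpatiallyPeriodic b F)
    (s : ℝ) :
    spatialDerivSup (k + 1) F s ^ 2 ≤
      8 * (spatialDerivSup k F s * spatialDerivSup (k + 2) F s) := by
  have hnonneg : 0 ≤ spatialDerivSup k F s * spatialDerivSup (k + 2) F s :=
    mul_nonneg (spatialDerivSup_nonneg _ _ _) (spatialDerivSup_nonneg _ _ _)
  rw [← Real.le_sqrt (spatialDerivSup_nonneg _ _ _) (by positivity)]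
  exact ciSup_le fun x => Real.le_sqrt_of_sq_le <| sq_norm_iteratedFDeriv_succ_le
    (B := ⟨spatialDerivSup (k + 2) F s, spatialDerivSup_nonneg _ _ _⟩) (contDiff_slice hF s)
    (norm_iteratedFDeriv_slice_le_spatialDerivSup (hF.of_le (by norm_cast; lia)) hper s)
    (norm_iteratedFDeriv_slice_le_spatialDerivSup hF hper s) x

end Slices

section EuclideanPeriods

variable {ι V : Type*} [Fintype ι]

/-- The basis of the period lattice `(2πℤ)^ι` of `ℝ^ι`. -/
def twoPiBasis (ι : Type*) [Fintype ι] : Module.Basis ι ℝ (EuclideanSpace ℝ ι) :=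
  (EuclideanSpace.basisFun ι ℝ).toBasis.isUnitSMul (w := fun _ => 2 * π)
    fun _ => two_pi_pos.ne'.isUnit

lemma spatiallyPeriodic_twoPiBasis_iff [DecidableEq ι] {F : EuclideanSpace ℝ ι × ℝ → V} :
    SpatiallyPeriodic (twoPiBasis ι) F ↔
      ∀ x t i, F (x + (2 * π) • EuclideanSpace.single i 1, t) = F (x, t) := by
  simp only [SpatiallyPeriodic, Function.Periodic, twoPiBasis, Module.Basis.isUnitSMul_apply,
    OrthonormalBasis.coe_toBasis, EuclideanSpace.basisFun_apply]
  exact ⟨fun h x t i => h t i x, fun h t i x => h x t i⟩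

end EuclideanPeriods

section Characteristics

open Set
open scoped NNReal

variable {E V : Type*} [NormedAddCommGroup E] [NormedSpace ℝ E] [NormedAddCommGroup V]
  [NormedSpace ℝ V]

lemma exists_isIntegralCurveOn_Icc_of_bounded [CompleteSpace E] {v : ℝ → E → E} {a b : ℝ}
    {K M : ℝ≥0} (hlip : ∀ s ∈ Icc a b, LipschitzWith K (v s))
    (hcont : ∀ x, ContinuousOn (v · x) (Icc a b)) (hbdd : ∀ s ∈ Icc a b, ∀ x, ‖v s x‖ ≤ M)
    (hab : a ≤ b) (x : E) : ∃ X : ℝ → E, X b = x ∧ IsIntegralCurveOn X v (Icc a b) := by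
  have hPL : IsPicardLindelof v (⟨b, right_mem_Icc.2 hab⟩ : Icc a b) x
      (M * (b - a).toNNReal) 0 M K :=
    { lipschitzOnWith := fun s hs => (hlip s hs).lipschitzOnWith
      continuousOn := fun y _ => hcont y
      norm_le := fun s hs y _ => hbdd s hs y
      mul_max_le := by simp [hab] }
  exact hPL.exists_eq_forall_mem_Icc_hasDerivWithinAt₀

lemma deriv_slice_add_fderiv_slice {f : E × ℝ → V} {y v : E} {s : ℝ}
    (hf : DifferentiableAt ℝ f (y, s)) :
    deriv (fun r => f (y, r)) s + fderiv ℝ (fun z => f (z, s)) y v = fderiv ℝ f (y, s) (v, 1) := by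
  have htime : HasDerivAt (fun r => f (y, r)) (fderiv ℝ f (y, s) (0, 1)) s :=
    hf.hasFDerivAt.comp_hasDerivAt s ((hasDerivAt_const s y).prodMk (hasDerivAt_id s))
  have hspace : HasFDerivAt (fun z => f (z, s)) _ y :=
    hf.hasFDerivAt.comp y (hasFDerivAt_prodMk_left y s)
  rw [htime.deriv, hspace.fderiv, ContinuousLinearMap.comp_apply, ← map_add]
  simp

lemma hasDerivWithinAt_iteratedFDeriv_slice {f : E × ℝ → V} {k : ℕ}
    (hf : ContDiff ℝ (k + 1 : ℕ) f) {X : ℝ → E} {v : E} {S : Set ℝ} {s : ℝ}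
    (hX : HasDerivWithinAt X v S s) :
    HasDerivWithinAt (fun r => iteratedFDeriv ℝ k (fun y => f (y, r)) (X r))
      (iteratedFDeriv ℝ k (fun y => fderiv ℝ f (y, s) (v, 1)) (X s)) S s := by
  let L := ContinuousMultilinearMap.compContinuousLinearMapL (𝕜 := ℝ) (F := V)
    fun _ : Fin k => ContinuousLinearMap.inl ℝ E ℝ
  have hk : ContDiff ℝ k f := hf.of_le (by norm_cast; lia)
  have hdir : ContDiff ℝ k fun z => fderiv ℝ f z (v, 1) :=
    (hf.fderiv_right (by norm_cast)).clm_apply contDiff_const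
  have hdiff : Differentiable ℝ (iteratedFDeriv ℝ k f) :=
    hf.differentiable_iteratedFDeriv (by norm_cast; lia)
  have hcurve : HasDerivWithinAt (fun r => (X r, r)) (v, (1 : ℝ)) S s :=
    hX.prodMk (hasDerivWithinAt_id s S)
  have hL := L.hasFDerivAt.comp (X s, s) (hdiff (X s, s)).hasFDerivAt
  convert! HasFDerivAt.comp_hasDerivWithinAt (f := fun r => (X r, r)) s hL hcurve using 1
  · funext r
    exact iteratedFDeriv_slice hk (X r) r
  · rw [iteratedFDeriv_slice hdir, iteratedFDeriv_fderiv_apply hf]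
    rfl

end Characteristics

section Transport

open Set Module
open scoped NNReal

variable {ι E V : Type*} [NormedAddCommGroup E] [NormedSpace ℝ E] [NormedAddCommGroup V]
  [NormedSpace ℝ V]

/-- The transport equation `∂ₜ f + u · ∇f = g` at the times in `S`. -/
def IsTransportSolutionOn (u : E × ℝ → E) (f g : E × ℝ → V) (S : Set ℝ) : Prop :=
  ∀ x, ∀ t ∈ S,
    deriv (fun s => f (x, s)) t + fderiv ℝ (fun y => f (y, t)) x (u (x, t)) = g (x, t)

variable {u : E × ℝ → E} {f g : E × ℝ → V} {S : Set ℝ} {n : ℕ} {s : ℝ}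

lemma IsTransportSolutionOn.mono {S' : Set ℝ} (h : IsTransportSolutionOn u f g S')
    (hS : S ⊆ S') : IsTransportSolutionOn u f g S :=
  fun x t ht => h x t (hS ht)

lemma IsTransportSolutionOn.fderiv_apply_eq_sub (h : IsTransportSolutionOn u f g S)
    (hf : Differentiable ℝ f) (hs : s ∈ S) (y v : E) :
    fderiv ℝ f (y, s) (v, 1) = g (y, s) - fderiv ℝ (fun z => f (z, s)) y (u (y, s) - v) := by
  rw [← deriv_slice_add_fderiv_slice (hf _), ← h y s hs, map_sub]
  abel

lemma norm_iteratedFDeriv_succ_clm_apply_le_leibnizSum {F : Type*} [NormedAddCommGroup F]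
    [NormedSpace ℝ F] {A : E → F →L[ℝ] V} {w : E → F} (hA : ContDiff ℝ (n + 1 : ℕ) A)
    (hw : ContDiff ℝ (n + 1 : ℕ) w) {x : E} (hx : w x = 0) :
    ‖iteratedFDeriv ℝ (n + 1) (fun y => A y (w y)) x‖ ≤
      leibnizSum n (fun i => ‖iteratedFDeriv ℝ i A x‖)
        (fun j => ‖iteratedFDeriv ℝ (j + 1) w x‖) := by
  refine (norm_iteratedFDeriv_clm_apply hA hw x le_rfl).trans_eq ?_
  rw [Finset.sum_range_succ, Nat.sub_self, norm_iteratedFDeriv_zero, hx, norm_zero, mul_zero,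
    add_zero, leibnizSum, Finset.Nat.sum_antidiagonal_eq_sum_range_succ_mk]
  refine Finset.sum_congr rfl fun i hi => ?_
  rw [mul_assoc, Nat.succ_sub (Finset.mem_range_succ_iff.1 hi)]

lemma iteratedFDeriv_succ_sub_const {w : E → V} (hw : ContDiff ℝ (n + 1 : ℕ) w) (c : V) (x : E) :
    iteratedFDeriv ℝ (n + 1) (fun y => w y - c) x = iteratedFDeriv ℝ (n + 1) w x := by
  rw [fun_iteratedFDeriv_sub_apply hw.contDiffAt contDiffAt_const, iteratedFDeriv_succ_const]
  simp

variable [Finite ι] {b : Basis ι ℝ E}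

/-- Freezing the velocity `u (x, s)` leaves the remainder `u · - u (x, s)`, which vanishes at `x`:
no derivative of `f` of order `n + 2` survives. -/
lemma IsTransportSolutionOn.norm_iteratedFDeriv_fderiv_apply_le
    (h : IsTransportSolutionOn u f g S) (hu : ContDiff ℝ (n + 1 : ℕ) u)
    (hf : ContDiff ℝ (n + 2 : ℕ) f) (hg : ContDiff ℝ (n + 1 : ℕ) g)
    (hu_per : SpatiallyPeriodic b u) (hf_per : SpatiallyPeriodic b f)
    (hg_per : SpatiallyPeriodic b g) (hs : s ∈ S) (x : E) :
    ‖iteratedFDeriv ℝ (n + 1) (fun y => fderiv ℝ f (y, s) (u (x, s), 1)) x‖ ≤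
      spatialDerivSup (n + 1) g s + leibnizSum n (fun i => spatialDerivSup (i + 1) f s)
        fun j => spatialDerivSup (j + 1) u s := by
  have hfs : ContDiff ℝ (n + 1 : ℕ) (fderiv ℝ fun y => f (y, s)) :=
    (contDiff_slice hf s).fderiv_right (by norm_cast)
  have hus : ContDiff ℝ (n + 1 : ℕ) fun y => u (y, s) - u (x, s) :=
    (contDiff_slice hu s).sub contDiff_const
  simp only [h.fderiv_apply_eq_sub (hf.differentiable (by simp)) hs]
  rw [fun_iteratedFDeriv_sub_apply (contDiff_slice hg s).contDiffAt
    (hfs.clm_apply hus).contDiffAt]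
  refine (norm_sub_le _ _).trans (add_le_add
    (norm_iteratedFDeriv_slice_le_spatialDerivSup hg hg_per s x) ?_)
  refine (norm_iteratedFDeriv_succ_clm_apply_le_leibnizSum hfs hus (sub_self _)).trans
    (leibnizSum_mono (fun i hi => ?_) (fun j hj => ?_) (fun i => spatialDerivSup_nonneg _ _ _)
      fun j => norm_nonneg _)
  · rw [norm_iteratedFDeriv_fderiv]
    exact norm_iteratedFDeriv_slice_le_spatialDerivSup (hf.of_le (by norm_cast; lia)) hf_per s x
  · have huj : ContDiff ℝ (j + 1 : ℕ) u := hu.of_le (by norm_cast; lia)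
    rw [iteratedFDeriv_succ_sub_const (contDiff_slice huj s)]
    exact norm_iteratedFDeriv_slice_le_spatialDerivSup huj hu_per s x

lemma SpatiallyPeriodic.exists_isIntegralCurveOn_Icc (hu_per : SpatiallyPeriodic b u)
    (hu : ContDiff ℝ 1 u) {t₀ t : ℝ} (ht : t₀ ≤ t) (x : E) :
    ∃ X : ℝ → E, X t = x ∧ IsIntegralCurveOn X (fun s y => u (y, s)) (Icc t₀ t) := by
  have : FiniteDimensional ℝ E := Module.Finite.of_basis b
  have : CompleteSpace E := FiniteDimensional.complete ℝ E
  have hsup : ∀ k : ℕ, ContDiff ℝ k u → ∃ M : ℝ≥0, ∀ s ∈ Icc t₀ t, ∀ x,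
      ‖iteratedFDeriv ℝ k (fun y => u (y, s)) x‖ ≤ M := fun k hk =>
    ⟨⟨_, spacetimeDerivSup_nonneg k u (Icc t₀ t)⟩, fun s hs x =>
      (norm_iteratedFDeriv_slice_le_spatialDerivSup hk hu_per s x).trans
        (spatialDerivSup_le_spacetimeDerivSup hk hu_per isCompact_Icc hs)⟩
  obtain ⟨M, hM⟩ := hsup 0 (hu.of_le (by simp))
  obtain ⟨K, hK⟩ := hsup 1 (mod_cast hu)
  simp only [norm_iteratedFDeriv_zero] at hM
  simp only [norm_iteratedFDeriv_one] at hK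
  refine exists_isIntegralCurveOn_Icc_of_bounded (K := K) (M := M) (fun s hs => ?_)
    (fun x => ?_) hM ht x
  · exact lipschitzWith_of_nnnorm_fderiv_le (𝕜 := ℝ)
      ((contDiff_slice hu s).differentiable one_ne_zero) (hK s hs)
  · exact (hu.continuous.comp (by fun_prop)).continuousOn

lemma IsTransportSolutionOn.spatialDerivSup_le_add_integral {t₀ t : ℝ}
    (h : IsTransportSolutionOn u f g (Icc t₀ t)) (hu : ContDiff ℝ (n + 1 : ℕ) u)
    (hf : ContDiff ℝ (n + 2 : ℕ) f) (hg : ContDiff ℝ (n + 1 : ℕ) g)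
    (hu_per : SpatiallyPeriodic b u) (hf_per : SpatiallyPeriodic b f)
    (hg_per : SpatiallyPeriodic b g) (ht : t₀ ≤ t) {R : ℝ → ℝ} (hR : Continuous R)
    (hle : ∀ s ∈ Icc t₀ t, spatialDerivSup (n + 1) g s +
      leibnizSum n (fun i => spatialDerivSup (i + 1) f s) (fun j => spatialDerivSup (j + 1) u s) ≤
        R s) :
    spatialDerivSup (n + 1) f t ≤ spatialDerivSup (n + 1) f t₀ + ∫ s in t₀..t, R s := by
  refine ciSup_le fun x => ?_
  obtain ⟨X, rfl, hX⟩ := hu_per.exists_isIntegralCurveOn_Icc (hu.of_le (by simp)) ht x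
  have hderiv := fun (s : ℝ) (hs : s ∈ Icc t₀ t) =>
    hasDerivWithinAt_iteratedFDeriv_slice hf (hX s hs)
  refine image_norm_le_of_norm_deriv_right_le_deriv_boundary
    (fun s hs => (hderiv s hs).continuousWithinAt)
    (fun s hs => (hderiv s (Ico_subset_Icc_self hs)).mono_of_mem_nhdsWithin
      (Icc_mem_nhdsGE_of_mem hs))
    ?_ (fun s => (hR.integral_hasStrictDerivAt t₀ s).hasDerivAt.const_add _)
    (fun s hs => ?_) (right_mem_Icc.2 ht)
  · simpa only [intervalIntegral.integral_same, add_zero] using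
      norm_iteratedFDeriv_slice_le_spatialDerivSup (hf.of_le (by norm_cast; lia)) hf_per t₀ (X t₀)
  · have hs' := Ico_subset_Icc_self hs
    exact (h.norm_iteratedFDeriv_fderiv_apply_le hu hf hg hu_per hf_per hg_per hs' (X s)).trans
      (hle s hs')

end Transport

section Estimate

open Set Module

variable {ι E V : Type*} [NormedAddCommGroup E] [NormedSpace ℝ E] [NormedAddCommGroup V]
  [NormedSpace ℝ V] [Finite ι] {b : Basis ι ℝ E} {u : E × ℝ → E} {f g : E × ℝ → V} {n : ℕ}
  {t₀ T t : ℝ}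

/-- The constant of the transport estimate for derivatives of order `n + 1`: `2 ^ (n + 1)` bounds
the sum of the Leibniz coefficients, and `8 ^ n ^ 2` comes from interpolating with Landau's
inequality, whose constant is `8`. -/
def transportConst (n : ℕ) : ℝ := 2 ^ (n + 1) * 8 ^ n ^ 2

lemma one_le_transportConst (n : ℕ) : 1 ≤ transportConst n :=
  one_le_mul_of_one_le_of_one_le (one_le_pow₀ one_le_two) (one_le_pow₀ (by norm_num))

lemma leibnizSum_spatialDerivSup_le (hu : ContDiff ℝ (n + 1 : ℕ) u)
    (hf : ContDiff ℝ (n + 1 : ℕ) f) (hu_per : SpatiallyPeriodic b u)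
    (hf_per : SpatiallyPeriodic b f) (s : ℝ) :
    leibnizSum n (fun i => spatialDerivSup (i + 1) f s) (fun j => spatialDerivSup (j + 1) u s) ≤
      transportConst n * (spatialDerivSup 1 f s * spatialDerivSup (n + 1) u s +
        spatialDerivSup (n + 1) f s * spatialDerivSup 1 u s) :=
  leibnizSum_le_of_sq_le_mul (fun _ => spatialDerivSup_nonneg _ _ _)
    (fun _ => spatialDerivSup_nonneg _ _ _) (by norm_num)
    (fun _ _ => sq_spatialDerivSup_succ_le (hf.of_le (by norm_cast; lia)) hf_per s)
    (fun _ _ => sq_spatialDerivSup_succ_le (hu.of_le (by norm_cast; lia)) hu_per s)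

lemma leibnizSum_spatialDerivSup_le_spacetimeDerivSup (hu : ContDiff ℝ (n + 1 : ℕ) u)
    (hf : ContDiff ℝ (n + 1 : ℕ) f) (hu_per : SpatiallyPeriodic b u)
    (hf_per : SpatiallyPeriodic b f) {S : Set ℝ} (hS : IsCompact S) {s : ℝ} (hs : s ∈ S) :
    leibnizSum n (fun i => spatialDerivSup (i + 1) f s) (fun j => spatialDerivSup (j + 1) u s) ≤
      transportConst n * spacetimeDerivSup (n + 1) u S * spatialDerivSup 1 f s +
        transportConst n * spacetimeDerivSup 1 u S * spatialDerivSup (n + 1) f s := by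
  refine (leibnizSum_spatialDerivSup_le hu hf hu_per hf_per s).trans ?_
  have hf₁ := spatialDerivSup_nonneg 1 f s
  have hfn := spatialDerivSup_nonneg (n + 1) f s
  have hC : 0 ≤ transportConst n := zero_le_one.trans (one_le_transportConst n)
  have hu₁ : spatialDerivSup 1 u s ≤ spacetimeDerivSup 1 u S :=
    spatialDerivSup_le_spacetimeDerivSup (hu.of_le (by norm_cast; lia)) hu_per hS hs
  have hun := spatialDerivSup_le_spacetimeDerivSup hu hu_per hS hs
  calc _ ≤ transportConst n * (spatialDerivSup 1 f s * spacetimeDerivSup (n + 1) u S +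
          spatialDerivSup (n + 1) f s * spacetimeDerivSup 1 u S) := by gcongr
    _ = _ := by ring

lemma IsTransportSolutionOn.spatialDerivSup_one_le (h : IsTransportSolutionOn u f g (Icc t₀ T))
    (hu : ContDiff ℝ 1 u) (hf : ContDiff ℝ 2 f) (hg : ContDiff ℝ 1 g)
    (hu_per : SpatiallyPeriodic b u) (hf_per : SpatiallyPeriodic b f)
    (hg_per : SpatiallyPeriodic b g) {K : ℝ} (hK : spacetimeDerivSup 1 u (Icc t₀ T) ≤ K)
    (ht : t ∈ Icc t₀ T) :
    spatialDerivSup 1 f t ≤ spatialDerivSup 1 f t₀ +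
      ∫ s in t₀..t, (spatialDerivSup 1 g s + K * spatialDerivSup 1 f s) := by
  refine (h.mono (Icc_subset_Icc_right ht.2)).spatialDerivSup_le_add_integral (n := 0)
    hu hf hg hu_per hf_per hg_per ht.1 ?_ fun s hs => ?_
  · exact (continuous_spatialDerivSup (k := 1) hg hg_per).add <| continuous_const.mul <|
      continuous_spatialDerivSup (k := 1) (hf.of_le one_le_two) hf_per
  · have hus := spatialDerivSup_le_spacetimeDerivSup (k := 1) hu hu_per isCompact_Icc
      (S := Icc t₀ T) ⟨hs.1, hs.2.trans ht.2⟩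
    rw [leibnizSum_zero, mul_comm]
    exact add_le_add_right
      (mul_le_mul_of_nonneg_right (hus.trans hK) (spatialDerivSup_nonneg _ _ _)) _

lemma IsTransportSolutionOn.spatialDerivSup_succ_le (h : IsTransportSolutionOn u f g (Icc t₀ T))
    (hu : ContDiff ℝ (n + 1 : ℕ) u) (hf : ContDiff ℝ (n + 2 : ℕ) f)
    (hg : ContDiff ℝ (n + 1 : ℕ) g) (hu_per : SpatiallyPeriodic b u)
    (hf_per : SpatiallyPeriodic b f) (hg_per : SpatiallyPeriodic b g) (ht : t ∈ Icc t₀ T) :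
    spatialDerivSup (n + 1) f t ≤ spatialDerivSup (n + 1) f t₀ + ∫ s in t₀..t,
      (spatialDerivSup (n + 1) g s +
        transportConst n * spacetimeDerivSup (n + 1) u (Icc t₀ T) * spatialDerivSup 1 f s +
        transportConst n * spacetimeDerivSup 1 u (Icc t₀ T) * spatialDerivSup (n + 1) f s) := by
  have hfc : ∀ i ≤ n, Continuous (spatialDerivSup (i + 1) f) := fun i hi =>
    continuous_spatialDerivSup (hf.of_le (by norm_cast; lia)) hf_per
  refine (h.mono (Icc_subset_Icc_right ht.2)).spatialDerivSup_le_add_integral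
    hu hf hg hu_per hf_per hg_per ht.1 ?_ fun s hs => ?_
  · exact ((continuous_spatialDerivSup hg hg_per).add
      (continuous_const.mul (hfc 0 n.zero_le))).add (continuous_const.mul (hfc n le_rfl))
  · rw [add_assoc]
    exact add_le_add_right (leibnizSum_spatialDerivSup_le_spacetimeDerivSup hu
      (hf.of_le (by norm_cast; lia)) hu_per hf_per isCompact_Icc ⟨hs.1, hs.2.trans ht.2⟩) _

theorem transport_higher_derivative_estimate_general
    (h : IsTransportSolutionOn u f g (Icc t₀ T))
    (hu : ContDiff ℝ (n + 1 : ℕ) u) (hf : ContDiff ℝ (n + 2 : ℕ) f)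
    (hg : ContDiff ℝ (n + 1 : ℕ) g) (hu_per : SpatiallyPeriodic b u)
    (hf_per : SpatiallyPeriodic b f) (hg_per : SpatiallyPeriodic b g) (ht : t ∈ Icc t₀ T) :
    spatialDerivSup (n + 1) f t ≤
      (spatialDerivSup (n + 1) f t₀ + transportConst n * (t - t₀) *
          spacetimeDerivSup (n + 1) u (Icc t₀ T) * spatialDerivSup 1 f t₀) *
        exp (transportConst n * (t - t₀) * spacetimeDerivSup 1 u (Icc t₀ T)) +
      ∫ τ in t₀..t, exp (transportConst n * (t - τ) * spacetimeDerivSup 1 u (Icc t₀ T)) *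
        (spatialDerivSup (n + 1) g τ + transportConst n * (t - τ) *
          spacetimeDerivSup (n + 1) u (Icc t₀ T) * spatialDerivSup 1 g τ) := by
  have hC := one_le_transportConst n
  have hDu := spacetimeDerivSup_nonneg 1 u (Icc t₀ T)
  have hDnu := spacetimeDerivSup_nonneg (n + 1) u (Icc t₀ T)
  have hu₁ : ContDiff ℝ 1 u := hu.of_le (by simp)
  have hf₁ : ContDiff ℝ 2 f := hf.of_le (by norm_cast; lia)
  have hg₁ : ContDiff ℝ 1 g := hg.of_le (by simp)
  have hgronwall := le_of_le_add_integral_of_le_add_integral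
    (continuous_spatialDerivSup (k := 1) (hf₁.of_le one_le_two) hf_per)
    (continuous_spatialDerivSup (k := n + 1) (hf.of_le (by norm_cast; lia)) hf_per)
    (continuous_spatialDerivSup (k := 1) hg₁ hg_per) (continuous_spatialDerivSup hg hg_per)
    (by positivity) (by positivity)
    (fun t ht => h.spatialDerivSup_one_le hu₁ hf₁ hg₁ hu_per hf_per hg_per
      (le_mul_of_one_le_left hDu hC) ht)
    (fun t ht => h.spatialDerivSup_succ_le hu hf hg hu_per hf_per hg_per ht) ht
  simpa only [mul_right_comm (transportConst n)] using hgronwall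

end Estimate

/-- Higher-derivative transport estimate for `∂ₜ f + u·∇f = g` (with a constant `C = C(N)`):
`‖D^N f(·,t)‖ ≤ (‖D^N f₀‖ + C (t−t₀) ‖D^N u‖ ‖Df₀‖) e^{C(t−t₀)‖Du‖}
  + ∫_{t₀}^t e^{C(t−τ)‖Du‖} ( ‖D^N g(·,τ)‖ + C (t−τ) ‖D^N u‖ ‖Dg(·,τ)‖ ) dτ`. -/
theorem transport_higher_derivative_estimate :
    ∀ N : ℕ, 2 ≤ N → ∃ C : ℝ,
    ∀ (t₀ T : ℝ), t₀ < T →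
    ∀ (u : E2 × ℝ → E2) (f g : E2 × ℝ → ℝ) (f₀ : E2 → ℝ),
    ContDiff ℝ (⊤ : ℕ∞) u →
    (∀ (x : E2) (t : ℝ) (i : Fin 2),
      u (x + (2 * π) • EuclideanSpace.single i 1, t) = u (x, t)) →
    ContDiff ℝ (⊤ : ℕ∞) f →
    (∀ (x : E2) (t : ℝ) (i : Fin 2),
      f (x + (2 * π) • EuclideanSpace.single i 1, t) = f (x, t)) →
    ContDiff ℝ (⊤ : ℕ∞) g →
    (∀ (x : E2) (t : ℝ) (i : Fin 2),
      g (x + (2 * π) • EuclideanSpace.single i 1, t) = g (x, t)) →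
    (∀ x, f (x, t₀) = f₀ x) →
    (∀ (x : E2), ∀ t ∈ Set.Icc t₀ T,
      deriv (fun s => f (x, s)) t + fderiv ℝ (fun y => f (y, t)) x (u (x, t)) = g (x, t)) →
    ∀ t ∈ Set.Icc t₀ T,
      (⨆ x : E2, ‖iteratedFDeriv ℝ N (fun y => f (y, t)) x‖)
        ≤ ((⨆ x : E2, ‖iteratedFDeriv ℝ N f₀ x‖)
              + C * (t - t₀) * supDNu N u t₀ T * (⨆ x : E2, ‖fderiv ℝ f₀ x‖))
            * Real.exp (C * (t - t₀) * supDu u t₀ T)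
          + ∫ τ in t₀..t,
              Real.exp (C * (t - τ) * supDu u t₀ T) *
                ((⨆ x : E2, ‖iteratedFDeriv ℝ N (fun y => g (y, τ)) x‖)
                  + C * (t - τ) * supDNu N u t₀ T *
                      (⨆ x : E2, ‖fderiv ℝ (fun y => g (y, τ)) x‖)) := by
  intro N hN
  obtain ⟨n, rfl⟩ := Nat.exists_eq_add_of_le' (one_le_two.trans hN)
  refine ⟨transportConst n, fun t₀ T _ u f g f₀ hu hu_per hf hf_per hg hg_per hf₀ h t ht => ?_⟩
  obtain rfl : (fun x => f (x, t₀)) = f₀ := funext hf₀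
  simpa only [supDu, supDNu, spatialDerivSup, spacetimeDerivSup, norm_iteratedFDeriv_one] using
    transport_higher_derivative_estimate_general h (contDiff_infty.1 hu _)
      (contDiff_infty.1 hf _) (contDiff_infty.1 hg _) (spatiallyPeriodic_twoPiBasis_iff.2 hu_per)
      (spatiallyPeriodic_twoPiBasis_iff.2 hf_per) (spatiallyPeriodic_twoPiBasis_iff.2 hg_per) ht
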